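/- arXiv:2410.18965 — 2 statements merged into one kernel-verified Lean document; each statement's English description precedes it below -/
import Mathlib

section
/- Suppose rank(X_0) = r = r_A (exact-parametrization), 0 < η ≤ 2/3, and let κ = σ_1(A)/σ_r(A). If at iteration t the smallest eigenvalue satisfies σ_r(X_tX_tᵀ) ≥ σ_r(A)/3, then the next ScaledGD iterate satisfies ‖X_{t+1}X_{t+1}ᵀ − A‖_F ≤ (1 − η) ‖X_tX_tᵀ − A‖_F + η² ‖A‖_F + 3 η² κ ‖A‖_F. -/
open Matrix BigOperators

/-- `kthEig M k` is the `k`-th largest eigenvalue of a real symmetric matrix `M`,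
via the Courant–Fischer max-min characterization. -/
noncomputable def kthEig {n : ℕ} (M : Matrix (Fin n) (Fin n) ℝ) (k : ℕ) : ℝ :=
  sSup {c : ℝ | ∃ V : Submodule ℝ (Fin n → ℝ), Module.finrank ℝ V = k ∧
    ∀ x ∈ V, c * (∑ i, x i ^ 2) ≤ ∑ i, x i * (M *ᵥ x) i}

/-- The Frobenius norm of a real matrix. -/
noncomputable def frobNorm {m n : ℕ} (M : Matrix (Fin m) (Fin n) ℝ) : ℝ :=
  Real.sqrt (∑ i, ∑ j, (M i j) ^ 2)

/-!
A ScaledGD step commutes with conjugation by a matrix `Q` with orthonormal columns. Nyström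
initialization puts `X 0` in the column space of `A = Q * D * Qᵀ`, so every iterate is `Q * Z` and
the step happens in the square coordinates `Z`. There `Z` is invertible, the step reads
`Z₊ = (1 - η) Z + η D Z⁻ᵀ`, and
`Z₊ Z₊ᵀ - D = (1 - η)² (Z Zᵀ - D) - η² D + η² D (Z Zᵀ)⁻¹ D`.
The last term is bounded through `‖D‖ ≤ σ₁(A)` and `‖(Z Zᵀ)⁻¹‖ ≤ σ_r(X Xᵀ)⁻¹`.
-/

section OrthonormalColumns

variable {m n : Type*} [Fintype m] [Fintype n]

lemma dotProduct_mulVec_conj (Q : Matrix m n ℝ) (P : Matrix n n ℝ) (x : m → ℝ) :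
    x ⬝ᵥ ((Q * P * Qᵀ) *ᵥ x) = (Qᵀ *ᵥ x) ⬝ᵥ (P *ᵥ (Qᵀ *ᵥ x)) := by
  rw [← mulVec_mulVec, ← mulVec_mulVec, dotProduct_mulVec, ← mulVec_transpose]

variable [DecidableEq n] {Q : Matrix m n ℝ}

lemma transpose_mulVec_mulVec (hQ : Qᵀ * Q = 1) (y : n → ℝ) : Qᵀ *ᵥ (Q *ᵥ y) = y := by
  rw [mulVec_mulVec, hQ, one_mulVec]

lemma mulVec_dotProduct_mulVec (hQ : Qᵀ * Q = 1) (y z : n → ℝ) :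
    (Q *ᵥ y) ⬝ᵥ (Q *ᵥ z) = y ⬝ᵥ z := by
  rw [dotProduct_mulVec, ← mulVec_transpose, transpose_mulVec_mulVec hQ]

lemma transpose_mulVec_dotProduct_self_le (hQ : Qᵀ * Q = 1) (x : m → ℝ) :
    (Qᵀ *ᵥ x) ⬝ᵥ (Qᵀ *ᵥ x) ≤ x ⬝ᵥ x := by
  set p := Q *ᵥ (Qᵀ *ᵥ x) with hp
  have hxp : x ⬝ᵥ p = (Qᵀ *ᵥ x) ⬝ᵥ (Qᵀ *ᵥ x) := by
    rw [hp, dotProduct_mulVec, ← mulVec_transpose]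
  have hpp : p ⬝ᵥ p = (Qᵀ *ᵥ x) ⬝ᵥ (Qᵀ *ᵥ x) := mulVec_dotProduct_mulVec hQ _ _
  have hnonneg : 0 ≤ (x - p) ⬝ᵥ (x - p) := dotProduct_self_star_nonneg (x - p)
  simp only [sub_dotProduct, dotProduct_sub, dotProduct_comm p x, hxp, hpp] at hnonneg
  linarith

end OrthonormalColumns

section OperatorNorm

open scoped Matrix.Norms.L2Operator

variable {m n : Type*} [Fintype m] [Fintype n]

lemma dotProduct_self_eq_norm_sq (x : n → ℝ) : x ⬝ᵥ x = ‖WithLp.toLp 2 x‖ ^ 2 := by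
  rw [EuclideanSpace.real_norm_sq_eq]
  simp only [dotProduct, sq]

variable [DecidableEq n]

lemma mulVec_dotProduct_self_le (M : Matrix m n ℝ) (x : n → ℝ) :
    (M *ᵥ x) ⬝ᵥ (M *ᵥ x) ≤ ‖M‖ ^ 2 * (x ⬝ᵥ x) := by
  rw [dotProduct_self_eq_norm_sq, dotProduct_self_eq_norm_sq, ← mul_pow]
  gcongr
  exact l2_opNorm_mulVec M (WithLp.toLp 2 x)

lemma dotProduct_mulVec_le (M : Matrix n n ℝ) (x : n → ℝ) : x ⬝ᵥ (M *ᵥ x) ≤ ‖M‖ * (x ⬝ᵥ x) := by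
  let v : EuclideanSpace ℝ n := WithLp.toLp 2 x
  calc x ⬝ᵥ (M *ᵥ x) = inner ℝ v (toEuclideanCLM (𝕜 := ℝ) M v) :=
        (inner_toEuclideanCLM M v v).symm
    _ ≤ ‖v‖ * (‖M‖ * ‖v‖) := (real_inner_le_norm _ _).trans <| by
        gcongr; exact (toEuclideanCLM (𝕜 := ℝ) M).le_opNorm v
    _ = ‖M‖ * (x ⬝ᵥ x) := by rw [dotProduct_self_eq_norm_sq]; ring

variable {P : Matrix n n ℝ} {s : ℝ}

lemma isUnit_of_forall_mul_dotProduct_le (hs : 0 < s)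
    (hP : ∀ y : n → ℝ, s * (y ⬝ᵥ y) ≤ y ⬝ᵥ (P *ᵥ y)) : IsUnit P := by
  rw [← mulVec_injective_iff_isUnit]
  refine (injective_iff_map_eq_zero P.mulVecLin).2 fun y hy => dotProduct_self_eq_zero.1 ?_
  have hle : s * (y ⬝ᵥ y) ≤ 0 := by simpa [← mulVecLin_apply, hy] using hP y
  exact (nonpos_of_mul_nonpos_right hle hs).antisymm (dotProduct_self_star_nonneg y)

lemma l2_opNorm_inv_le (hs : 0 < s) (hP : ∀ y : n → ℝ, s * (y ⬝ᵥ y) ≤ y ⬝ᵥ (P *ᵥ y)) :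
    ‖P⁻¹‖ ≤ s⁻¹ := by
  have hdet := (isUnit_iff_isUnit_det P).1 (isUnit_of_forall_mul_dotProduct_le hs hP)
  refine ContinuousLinearMap.opNorm_le_bound _ (by positivity) fun x => ?_
  set y := toEuclideanCLM (𝕜 := ℝ) P⁻¹ x with hy
  have hPy : P *ᵥ y.ofLp = x.ofLp := by
    rw [hy, ofLp_toEuclideanCLM, mulVec_mulVec, mul_nonsing_inv _ hdet, one_mulVec]
  have hquad : s * ‖y‖ ^ 2 ≤ ‖y‖ * ‖x‖ :=
    calc s * ‖y‖ ^ 2 ≤ y.ofLp ⬝ᵥ x.ofLp := by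
          simpa only [hPy, dotProduct_self_eq_norm_sq, WithLp.toLp_ofLp] using hP y.ofLp
      _ = inner ℝ x y := rfl
      _ ≤ ‖y‖ * ‖x‖ := (real_inner_le_norm x y).trans_eq (mul_comm _ _)
  change ‖y‖ ≤ s⁻¹ * ‖x‖
  rw [le_inv_mul_iff₀ hs]
  rcases (norm_nonneg y).eq_or_lt with hzero | hpos
  · simp [← hzero]
  · exact le_of_mul_le_mul_left (by linarith) hpos

end OperatorNorm

section KthEig

open scoped Matrix.Norms.L2Operator

lemma kthEig_eq_sSup_dotProduct {n : ℕ} (M : Matrix (Fin n) (Fin n) ℝ) (k : ℕ) :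
    kthEig M k = sSup {c : ℝ | ∃ V : Submodule ℝ (Fin n → ℝ), Module.finrank ℝ V = k ∧
      ∀ x ∈ V, c * (x ⬝ᵥ x) ≤ x ⬝ᵥ (M *ᵥ x)} := by
  simp only [kthEig, dotProduct, sq]

lemma le_kthEig {n k : ℕ} (hk : 0 < k) {M : Matrix (Fin n) (Fin n) ℝ} {c : ℝ}
    {V : Submodule ℝ (Fin n → ℝ)} (hV : Module.finrank ℝ V = k)
    (hc : ∀ x ∈ V, c * (x ⬝ᵥ x) ≤ x ⬝ᵥ (M *ᵥ x)) : c ≤ kthEig M k := by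
  rw [kthEig_eq_sSup_dotProduct]
  refine le_csSup ⟨‖M‖, ?_⟩ ⟨V, hV, hc⟩
  rintro b ⟨W, rfl, hb⟩
  obtain ⟨x, hxW, hx⟩ := Submodule.exists_mem_ne_zero_of_ne_bot (Submodule.one_le_finrank_iff.1 hk)
  have hpos : 0 < x ⬝ᵥ x :=
    (dotProduct_self_star_nonneg x).lt_of_ne' (mt dotProduct_self_eq_zero.1 hx)
  exact le_of_mul_le_mul_right ((hb x hxW).trans (dotProduct_mulVec_le M x)) hpos

lemma exists_submodule_of_lt_kthEig {n k : ℕ} {M : Matrix (Fin n) (Fin n) ℝ} {c : ℝ}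
    (hc : 0 ≤ c) (h : c < kthEig M k) :
    ∃ V : Submodule ℝ (Fin n → ℝ), Module.finrank ℝ V = k ∧
      ∀ x ∈ V, c * (x ⬝ᵥ x) ≤ x ⬝ᵥ (M *ᵥ x) := by
  rw [kthEig_eq_sSup_dotProduct] at h
  -- The supremum of the empty set is `0`, so a positive supremum has witnesses.
  obtain ⟨b, ⟨V, hV, hb⟩, hcb⟩ := exists_lt_of_lt_csSup
    (Set.nonempty_iff_ne_empty.2 fun hempty => by
      rw [hempty, Real.sSup_empty] at h; exact h.not_ge hc) h
  refine ⟨V, hV, fun x hx => le_trans ?_ (hb x hx)⟩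
  exact mul_le_mul_of_nonneg_right hcb.le (dotProduct_self_star_nonneg x)

variable {m r : ℕ} {Q : Matrix (Fin m) (Fin r) ℝ} {P : Matrix (Fin r) (Fin r) ℝ}

lemma le_kthEig_conj (hQ : Qᵀ * Q = 1) {k : ℕ} (hk : 0 < k) {c : ℝ}
    {W : Submodule ℝ (Fin r → ℝ)} (hW : Module.finrank ℝ W = k)
    (hc : ∀ y ∈ W, c * (y ⬝ᵥ y) ≤ y ⬝ᵥ (P *ᵥ y)) : c ≤ kthEig (Q * P * Qᵀ) k := by
  have hinj : Function.Injective Q.mulVecLin :=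
    Function.LeftInverse.injective (g := Qᵀ.mulVecLin) (transpose_mulVec_mulVec hQ)
  refine le_kthEig (V := W.map Q.mulVecLin) hk ?_ ?_
  · rw [← hW, (Submodule.equivMapOfInjective _ hinj W).finrank_eq]
  · rintro _ ⟨y, hy, rfl⟩
    rw [mulVecLin_apply, dotProduct_mulVec_conj, mulVec_dotProduct_mulVec hQ,
      transpose_mulVec_mulVec hQ]
    exact hc y hy

lemma apply_le_kthEig_one (hQ : Qᵀ * Q = 1) (d : Fin r → ℝ) (i : Fin r) :
    d i ≤ kthEig (Q * diagonal d * Qᵀ) 1 := by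
  refine le_kthEig_conj hQ one_pos (W := ℝ ∙ Pi.single i 1) (finrank_span_singleton (by simp)) ?_
  intro y hy
  obtain ⟨a, rfl⟩ := Submodule.mem_span_singleton.1 hy
  exact le_of_eq (by simp [mulVec_diagonal]; ring)

lemma le_kthEig_of_forall_le (hQ : Qᵀ * Q = 1) (hr : 0 < r) {d : Fin r → ℝ} {c : ℝ}
    (hc : ∀ i, c ≤ d i) : c ≤ kthEig (Q * diagonal d * Qᵀ) r := by
  refine le_kthEig_conj hQ hr (W := ⊤) (by simp) fun y _ => ?_
  simp only [dotProduct, mulVec_diagonal, Finset.mul_sum]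
  refine Finset.sum_le_sum fun i _ => ?_
  linarith [mul_le_mul_of_nonneg_right (hc i) (mul_self_nonneg (y i))]

lemma kthEig_pos (hQ : Qᵀ * Q = 1) (hr : 0 < r) {d : Fin r → ℝ} (hd : ∀ i, 0 < d i) :
    0 < kthEig (Q * diagonal d * Qᵀ) r := by
  have : Nonempty (Fin r) := ⟨⟨0, hr⟩⟩
  obtain ⟨i, hi⟩ := Finite.exists_min d
  exact (hd i).trans_le (le_kthEig_of_forall_le hQ hr hi)

-- On a witness subspace `V` for `c`, `Qᵀ` is injective, hence by dimension onto `Fin r → ℝ`.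
lemma mul_dotProduct_le_of_lt_kthEig_conj (hQ : Qᵀ * Q = 1) {c : ℝ} (hc : 0 < c)
    (h : c < kthEig (Q * P * Qᵀ) r) (y : Fin r → ℝ) : c * (y ⬝ᵥ y) ≤ y ⬝ᵥ (P *ᵥ y) := by
  obtain ⟨V, hV, hquad⟩ := exists_submodule_of_lt_kthEig hc.le h
  have hinj : Function.Injective (Qᵀ.mulVecLin.domRestrict V) := by
    refine (injective_iff_map_eq_zero _).2 fun x hx => Subtype.ext (dotProduct_self_eq_zero.1 ?_)
    have hQx : Qᵀ *ᵥ x.1 = 0 := hx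
    have hle : c * (x.1 ⬝ᵥ x.1) ≤ 0 := by
      simpa [dotProduct_mulVec_conj, hQx] using hquad x.1 x.2
    exact (nonpos_of_mul_nonpos_right hle hc).antisymm (dotProduct_self_star_nonneg x.1)
  obtain ⟨x, rfl⟩ :=
    (LinearMap.injective_iff_surjective_of_finrank_eq_finrank (by simp [hV])).1 hinj y
  calc c * ((Qᵀ *ᵥ x.1) ⬝ᵥ (Qᵀ *ᵥ x.1)) ≤ c * (x.1 ⬝ᵥ x.1) := by
        gcongr; exact transpose_mulVec_dotProduct_self_le hQ x.1
    _ ≤ x.1 ⬝ᵥ ((Q * P * Qᵀ) *ᵥ x.1) := hquad x.1 x.2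
    _ = _ := dotProduct_mulVec_conj Q P x.1

lemma kthEig_mul_dotProduct_le (hQ : Qᵀ * Q = 1) (hpos : 0 < kthEig (Q * P * Qᵀ) r)
    (y : Fin r → ℝ) : kthEig (Q * P * Qᵀ) r * (y ⬝ᵥ y) ≤ y ⬝ᵥ (P *ᵥ y) := by
  refine le_of_tendsto ((Filter.tendsto_id.mono_left nhdsWithin_le_nhds).mul_const (y ⬝ᵥ y))
    (Filter.mem_of_superset (Ioo_mem_nhdsLT hpos) ?_)
  exact fun c hc => mul_dotProduct_le_of_lt_kthEig_conj hQ hc.1 hc.2 y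

end KthEig

section FrobeniusNorm

lemma frobNorm_nonneg {m n : ℕ} (M : Matrix (Fin m) (Fin n) ℝ) : 0 ≤ frobNorm M :=
  Real.sqrt_nonneg _

section

attribute [local instance] Matrix.frobeniusNormedAddCommGroup Matrix.frobeniusNormedSpace

lemma frobNorm_eq_norm {m n : ℕ} (M : Matrix (Fin m) (Fin n) ℝ) : frobNorm M = ‖M‖ := by
  simp [frobenius_norm_def, frobNorm, Real.sqrt_eq_rpow]

lemma frobNorm_add_le {m n : ℕ} (M N : Matrix (Fin m) (Fin n) ℝ) :
    frobNorm (M + N) ≤ frobNorm M + frobNorm N := by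
  simpa only [frobNorm_eq_norm] using norm_add_le M N

lemma frobNorm_sub_le {m n : ℕ} (M N : Matrix (Fin m) (Fin n) ℝ) :
    frobNorm (M - N) ≤ frobNorm M + frobNorm N := by
  simpa only [frobNorm_eq_norm] using norm_sub_le M N

lemma frobNorm_smul {m n : ℕ} (c : ℝ) (M : Matrix (Fin m) (Fin n) ℝ) :
    frobNorm (c • M) = |c| * frobNorm M := by
  simpa only [frobNorm_eq_norm, Real.norm_eq_abs] using norm_smul c M

end

lemma frobNorm_eq_sqrt_trace {m n : ℕ} (M : Matrix (Fin m) (Fin n) ℝ) :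
    frobNorm M = √(Mᵀ * M).trace := by
  rw [frobNorm, Finset.sum_comm]
  simp [trace, Matrix.mul_apply, sq]

lemma frobNorm_conj {m r : ℕ} {Q : Matrix (Fin m) (Fin r) ℝ} (hQ : Qᵀ * Q = 1)
    (M : Matrix (Fin r) (Fin r) ℝ) : frobNorm (Q * M * Qᵀ) = frobNorm M := by
  have hgram : (Q * M * Qᵀ)ᵀ * (Q * M * Qᵀ) = Q * (Mᵀ * M * Qᵀ) :=
    calc (Q * M * Qᵀ)ᵀ * (Q * M * Qᵀ) = Q * (Mᵀ * (Qᵀ * Q) * M * Qᵀ) := by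
          simp only [transpose_mul, transpose_transpose, Matrix.mul_assoc]
      _ = Q * (Mᵀ * M * Qᵀ) := by rw [hQ, Matrix.mul_one]
  rw [frobNorm_eq_sqrt_trace, hgram, trace_mul_comm, Matrix.mul_assoc, hQ, Matrix.mul_one,
    ← frobNorm_eq_sqrt_trace]

lemma frobNorm_sq_eq_sum_col {m n : ℕ} (M : Matrix (Fin m) (Fin n) ℝ) :
    frobNorm M ^ 2 = ∑ j, M.col j ⬝ᵥ M.col j := by
  rw [frobNorm, Real.sq_sqrt (by positivity), Finset.sum_comm]
  simp only [dotProduct, col_apply, sq]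

open scoped Matrix.Norms.L2Operator

lemma frobNorm_mul_le {l m n : ℕ} (M : Matrix (Fin l) (Fin m) ℝ) (N : Matrix (Fin m) (Fin n) ℝ) :
    frobNorm (M * N) ≤ ‖M‖ * frobNorm N := by
  refine le_of_sq_le_sq ?_ (mul_nonneg (norm_nonneg M) (frobNorm_nonneg N))
  rw [mul_pow, frobNorm_sq_eq_sum_col, frobNorm_sq_eq_sum_col, Finset.mul_sum]
  exact Finset.sum_le_sum fun j _ => mulVec_dotProduct_self_le M (N.col j)

end FrobeniusNorm

/-- One ScaledGD step with step size `η` for the factorization `A ≈ X * Xᵀ`. The matrix inverse is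
`0` when `Xᵀ * X` is singular, and the step is then trivial. -/
noncomputable def scaledGDStep {m n : Type*} [Fintype m] [Fintype n] [DecidableEq n]
    (A : Matrix m m ℝ) (η : ℝ) (X : Matrix m n ℝ) : Matrix m n ℝ :=
  X - η • ((X * Xᵀ - A) * X * (Xᵀ * X)⁻¹)

section ScaledGDStep

variable {m n : Type*} [Fintype n]

lemma conj_mul_transpose_sub (Q : Matrix m n ℝ) (D Z : Matrix n n ℝ) :
    (Q * Z) * (Q * Z)ᵀ - Q * D * Qᵀ = Q * (Z * Zᵀ - D) * Qᵀ := by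
  simp only [transpose_mul, Matrix.mul_sub, Matrix.sub_mul, Matrix.mul_assoc]

variable [Fintype m] [DecidableEq n]

lemma scaledGDStep_conj {Q : Matrix m n ℝ} (hQ : Qᵀ * Q = 1) (D : Matrix n n ℝ) (η : ℝ)
    (Z : Matrix n n ℝ) : scaledGDStep (Q * D * Qᵀ) η (Q * Z) = Q * scaledGDStep D η Z := by
  have hcancel (M : Matrix n n ℝ) : Qᵀ * (Q * M) = M := by
    rw [← Matrix.mul_assoc, hQ, Matrix.one_mul]
  have hgram : (Q * Z)ᵀ * (Q * Z) = Zᵀ * Z := by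
    rw [transpose_mul, Matrix.mul_assoc, hcancel]
  rw [scaledGDStep, conj_mul_transpose_sub, hgram, scaledGDStep, Matrix.mul_sub Q Z,
    Matrix.mul_smul]
  simp only [Matrix.mul_assoc, hcancel]

lemma exists_eq_mul_of_scaledGDStep {Q : Matrix m n ℝ} (hQ : Qᵀ * Q = 1) {D : Matrix n n ℝ} {η : ℝ}
    {X : ℕ → Matrix m n ℝ} (hX : ∀ s, X (s + 1) = scaledGDStep (Q * D * Qᵀ) η (X s))
    (h₀ : ∃ Z : Matrix n n ℝ, X 0 = Q * Z) (t : ℕ) : ∃ Z : Matrix n n ℝ, X t = Q * Z := by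
  induction t with
  | zero => exact h₀
  | succ t ih =>
    obtain ⟨Z, hZ⟩ := ih
    exact ⟨scaledGDStep D η Z, by rw [hX, hZ, scaledGDStep_conj hQ]⟩

variable {D Z : Matrix n n ℝ}

lemma scaledGDStep_of_isUnit (hZ : IsUnit Z) (η : ℝ) :
    scaledGDStep D η Z = (1 - η) • Z + η • (D * (Zᵀ)⁻¹) := by
  have hdet := (isUnit_iff_isUnit_det Z).1 hZ
  have hdetT : IsUnit Zᵀ.det := by rwa [det_transpose]
  have hright : Z * (Zᵀ * Z)⁻¹ = (Zᵀ)⁻¹ := by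
    rw [Matrix.mul_inv_rev, mul_nonsing_inv_cancel_left _ _ hdet]
  rw [scaledGDStep, Matrix.mul_assoc, hright, Matrix.sub_mul,
    mul_nonsing_inv_cancel_right _ _ hdetT]
  module

lemma scaledGDStep_mul_transpose_sub (hD : D.IsSymm) (hZ : IsUnit Z) (η : ℝ) :
    scaledGDStep D η Z * (scaledGDStep D η Z)ᵀ - D =
      (1 - η) ^ 2 • (Z * Zᵀ - D) - η ^ 2 • D + η ^ 2 • (D * ((Z * Zᵀ)⁻¹ * D)) := by
  have hdet := (isUnit_iff_isUnit_det Z).1 hZ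
  have hdetT : IsUnit Zᵀ.det := by rwa [det_transpose]
  have hcross : Z * (Z⁻¹ * D) = D := mul_nonsing_inv_cancel_left _ _ hdet
  have hcrossT : D * ((Zᵀ)⁻¹ * Zᵀ) = D := by rw [nonsing_inv_mul _ hdetT, Matrix.mul_one]
  have hinvT : ((Zᵀ)⁻¹)ᵀ = Z⁻¹ := by rw [transpose_nonsing_inv, transpose_transpose]
  rw [scaledGDStep_of_isUnit hZ]
  simp only [transpose_add, transpose_smul, transpose_mul, hD.eq, hinvT, Matrix.add_mul,
    Matrix.mul_add, Matrix.smul_mul, Matrix.mul_smul, Matrix.mul_assoc, hcross, hcrossT,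
    Matrix.mul_inv_rev]
  module

end ScaledGDStep

section Contraction

open scoped Matrix.Norms.L2Operator

lemma frobNorm_scaledGDStep_sub_le_of_isUnit {r : ℕ} {D Z : Matrix (Fin r) (Fin r) ℝ}
    (hD : D.IsSymm) (hZ : IsUnit Z) {η : ℝ} (hη₀ : 0 ≤ η) (hη₁ : η ≤ 1) :
    frobNorm (scaledGDStep D η Z * (scaledGDStep D η Z)ᵀ - D) ≤
      (1 - η) * frobNorm (Z * Zᵀ - D) + η ^ 2 * frobNorm D
        + η ^ 2 * (‖D‖ * (‖(Z * Zᵀ)⁻¹‖ * frobNorm D)) := by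
  have hcoeff : (1 - η) ^ 2 ≤ 1 - η := pow_le_of_le_one (by linarith) (by linarith) two_ne_zero
  have hquad : frobNorm (D * ((Z * Zᵀ)⁻¹ * D)) ≤ ‖D‖ * (‖(Z * Zᵀ)⁻¹‖ * frobNorm D) :=
    (frobNorm_mul_le _ _).trans <| by gcongr; exact frobNorm_mul_le _ _
  rw [scaledGDStep_mul_transpose_sub hD hZ]
  calc _ ≤ frobNorm ((1 - η) ^ 2 • (Z * Zᵀ - D)) + frobNorm (η ^ 2 • D)
        + frobNorm (η ^ 2 • (D * ((Z * Zᵀ)⁻¹ * D))) :=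
      (frobNorm_add_le _ _).trans <| by gcongr; exact frobNorm_sub_le _ _
    _ = (1 - η) ^ 2 * frobNorm (Z * Zᵀ - D) + η ^ 2 * frobNorm D
        + η ^ 2 * frobNorm (D * ((Z * Zᵀ)⁻¹ * D)) := by
      simp only [frobNorm_smul, abs_sq]
    _ ≤ _ := by
      gcongr
      exact frobNorm_nonneg _

variable {m r : ℕ} {Q : Matrix (Fin m) (Fin r) ℝ} {d : Fin r → ℝ}

lemma l2_opNorm_diagonal_le_kthEig_one (hQ : Qᵀ * Q = 1) (hr : 0 < r) (hd : ∀ i, 0 ≤ d i) :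
    ‖diagonal d‖ ≤ kthEig (Q * diagonal d * Qᵀ) 1 := by
  have : Nonempty (Fin r) := ⟨⟨0, hr⟩⟩
  rw [l2_opNorm_diagonal, pi_norm_le_iff_of_nonempty]
  intro i
  rw [Real.norm_of_nonneg (hd i)]
  exact apply_le_kthEig_one hQ d i

lemma frobNorm_scaledGDStep_sub_le (hr : 0 < r) (hQ : Qᵀ * Q = 1) (hd : ∀ i, 0 ≤ d i)
    {A : Matrix (Fin m) (Fin m) ℝ} (hA : A = Q * diagonal d * Qᵀ)
    {X : Matrix (Fin m) (Fin r) ℝ} (hX : ∃ Z : Matrix (Fin r) (Fin r) ℝ, X = Q * Z)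
    {η : ℝ} (hη₀ : 0 ≤ η) (hη₁ : η ≤ 1) {s : ℝ} (hs : 0 < s) (hsX : s ≤ kthEig (X * Xᵀ) r) :
    frobNorm (scaledGDStep A η X * (scaledGDStep A η X)ᵀ - A) ≤
      (1 - η) * frobNorm (X * Xᵀ - A) + η ^ 2 * frobNorm A
        + η ^ 2 * (kthEig A 1 * (s⁻¹ * frobNorm A)) := by
  obtain ⟨Z, rfl⟩ := hX
  subst hA
  have hgram : (Q * Z) * (Q * Z)ᵀ = Q * (Z * Zᵀ) * Qᵀ := by
    simp only [transpose_mul, Matrix.mul_assoc]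
  rw [hgram] at hsX
  have hcoercive (y : Fin r → ℝ) : s * (y ⬝ᵥ y) ≤ y ⬝ᵥ ((Z * Zᵀ) *ᵥ y) :=
    (mul_le_mul_of_nonneg_right hsX (dotProduct_self_star_nonneg y)).trans
      (kthEig_mul_dotProduct_le hQ (hs.trans_le hsX) y)
  have hZ : IsUnit Z := isUnit_of_mul_isUnit_left (isUnit_of_forall_mul_dotProduct_le hs hcoercive)
  have hinv : ‖(Z * Zᵀ)⁻¹‖ ≤ s⁻¹ := l2_opNorm_inv_le hs hcoercive
  have hnorm := l2_opNorm_diagonal_le_kthEig_one hQ hr hd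
  have hσ₁ := (norm_nonneg _).trans hnorm
  have hfrob := frobNorm_nonneg (diagonal d)
  simp only [scaledGDStep_conj hQ, conj_mul_transpose_sub, frobNorm_conj hQ]
  refine (frobNorm_scaledGDStep_sub_le_of_isUnit (isSymm_diagonal d) hZ hη₀ hη₁).trans ?_
  gcongr

end Contraction

theorem stmt_1_general {m r : ℕ} (hr : 0 < r) {A : Matrix (Fin m) (Fin m) ℝ}
    {Q : Matrix (Fin m) (Fin r) ℝ} {d : Fin r → ℝ} (hQ : Qᵀ * Q = 1) (hd : ∀ i, 0 < d i)
    (hA : A = Q * diagonal d * Qᵀ) {η : ℝ} (hη₀ : 0 ≤ η) (hη₁ : η ≤ 1)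
    {κ : ℝ} (hκ : κ = kthEig A 1 / kthEig A r) {Ω : Matrix (Fin m) (Fin r) ℝ}
    {X : ℕ → Matrix (Fin m) (Fin r) ℝ} (hX₀ : X 0 = A * Ω)
    (hX : ∀ s, X (s + 1) = scaledGDStep A η (X s)) {t : ℕ}
    (hlow : kthEig A r / 3 ≤ kthEig (X t * (X t)ᵀ) r) :
    frobNorm (X (t + 1) * (X (t + 1))ᵀ - A) ≤
      (1 - η) * frobNorm (X t * (X t)ᵀ - A) + η ^ 2 * frobNorm A
        + 3 * η ^ 2 * κ * frobNorm A := by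
  have hrange : ∃ Z : Matrix (Fin r) (Fin r) ℝ, X t = Q * Z :=
    exists_eq_mul_of_scaledGDStep hQ (hA ▸ hX)
      ⟨diagonal d * Qᵀ * Ω, by rw [hX₀, hA]; simp only [Matrix.mul_assoc]⟩ t
  have hpos : 0 < kthEig A r := hA ▸ kthEig_pos hQ hr hd
  have hstep := frobNorm_scaledGDStep_sub_le hr hQ (fun i => (hd i).le) hA hrange hη₀ hη₁
    (div_pos hpos three_pos) hlow
  rw [hX, hκ]
  refine hstep.trans_eq ?_
  field_simp

/-- One-step linear contraction (Phase 1) for ScaledGD with Nyström initialization in the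
symmetric exact-parametrized setting: if `σ_r(X_t X_tᵀ) ≥ σ_r(A)/3` then
`‖X_{t+1}X_{t+1}ᵀ − A‖_F ≤ (1−η)‖X_tX_tᵀ − A‖_F + η²‖A‖_F + 3η²κ‖A‖_F`,
where `κ = σ_1(A)/σ_r(A)`. -/
theorem stmt_1
    (m r : ℕ) (hr : 0 < r)
    (A : Matrix (Fin m) (Fin m) ℝ)
    (Q : Matrix (Fin m) (Fin r) ℝ) (d : Fin r → ℝ)
    (hQ : Qᵀ * Q = 1)
    (hd : ∀ i, 0 < d i)
    (hdmono : ∀ i j : Fin r, i ≤ j → d j ≤ d i)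
    (hA : A = Q * Matrix.diagonal d * Qᵀ)
    (η : ℝ) (hη0 : 0 < η) (hη1 : η ≤ 2 / 3)
    (κ : ℝ) (hκ : κ = kthEig A 1 / kthEig A r)
    (Ω : Matrix (Fin m) (Fin r) ℝ)
    (X : ℕ → Matrix (Fin m) (Fin r) ℝ)
    (hX0 : X 0 = A * Ω)
    (hrank : (X 0).rank = r)
    (hrec : ∀ s : ℕ,
      X (s + 1) = X s - η • ((X s * (X s)ᵀ - A) * X s * ((X s)ᵀ * X s)⁻¹))
    (t : ℕ)
    (hlow : kthEig A r / 3 ≤ kthEig (X t * (X t)ᵀ) r) :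
    frobNorm (X (t + 1) * (X (t + 1))ᵀ - A)
      ≤ (1 - η) * frobNorm (X t * (X t)ᵀ - A)
          + η ^ 2 * frobNorm A + 3 * η ^ 2 * κ * frobNorm A :=
  stmt_1_general hr hQ hd hA hη0.le (hη1.trans (by norm_num)) hκ hX0 hrec hlow
end

section
/- Let A ∈ R^{m×n} have rank r_A, let r ≥ r_A (over-parametrization), and let Ω ∈ R^{n×r} be such that X = AΩ has rank r_A. Let P ∈ R^{r×r} be the Moore–Penrose pseudoinverse of XᵀX (i.e., (XᵀX)P(XᵀX) = XᵀX, P(XᵀX)P = P, and both (XᵀX)P and P(XᵀX) are symmetric), and set Y = Aᵀ X P (the first modified ScaledGD step with η = 1 and pseudoinverse preconditioner, starting from X_0 = AΩ, Y_0 = 0). Then X Yᵀ = A; i.e., global convergence is achieved in one step. -/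
open Matrix BigOperators

/-!
Since `X = AΩ` has the same rank as `A`, the two matrices have the same column space, so `A = XW`
for some `W`. Now `XYᵀ = XPᵀXᵀA`, and `XPᵀXᵀ` fixes the column space of `X`: `Pᵀ` is again a
generalized inverse of the symmetric matrix `XᵀX`, and the left factor `Xᵀ` in
`XᵀX(PᵀXᵀX) = XᵀX` cancels because `XᵀX` and `X` have the same kernel. Hence `XYᵀ = XW = A`.
-/

section ColumnSpace

variable {m n r : Type*} [Fintype n] [Fintype r]

lemma exists_eq_mul_of_range_mulVecLin_le {R : Type*} [CommSemiring R]
    {A : Matrix m n R} {X : Matrix m r R}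
    (h : LinearMap.range A.mulVecLin ≤ LinearMap.range X.mulVecLin) :
    ∃ W : Matrix r n R, A = X * W := by
  classical
  have columns (j : n) : ∃ w : r → R, X *ᵥ w = A.col j := by
    simpa only [LinearMap.mem_range, mulVecLin_apply, mulVec_single_one] using
      h (LinearMap.mem_range_self A.mulVecLin (Pi.single j 1))
  choose w hw using columns
  exact ⟨(of w)ᵀ, Matrix.ext fun i j => (congrFun (hw j) i).symm⟩

lemma range_mulVecLin_mul_eq_of_rank_mul_eq {K : Type*} [Field K]
    {A : Matrix m n K} {B : Matrix n r K} (h : (A * B).rank = A.rank) :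
    LinearMap.range (A * B).mulVecLin = LinearMap.range A.mulVecLin := by
  refine Submodule.eq_of_le_of_finrank_eq ?_ h
  rw [mulVecLin_mul]
  exact LinearMap.range_comp_le_range _ _

end ColumnSpace

/-- `G` is an inner inverse (a generalized inverse, or `{1}`-inverse) of `M`. This is the first of
the four Penrose conditions, so the Moore–Penrose pseudoinverse is an instance. -/
def IsInnerInverse {m n R : Type*} [Fintype m] [Fintype n] [NonUnitalSemiring R]
    (M : Matrix m n R) (G : Matrix n m R) : Prop :=
  M * G * M = M

lemma IsInnerInverse.conjTranspose {m n R : Type*} [Fintype m] [Fintype n]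
    [NonUnitalSemiring R] [StarRing R] {M : Matrix m n R} {G : Matrix n m R}
    (h : IsInnerInverse M G) : IsInnerInverse Mᴴ Gᴴ := by
  simpa only [IsInnerInverse, conjTranspose_mul, Matrix.mul_assoc] using
    congrArg Matrix.conjTranspose h

section Gram

variable {m n R : Type*} [Fintype m] [Fintype n] [PartialOrder R]

lemma conjTranspose_mul_self_mul_inj {p : Type*} [NonUnitalRing R] [StarRing R]
    [StarOrderedRing R] [NoZeroDivisors R] {X : Matrix m n R} {B C : Matrix n p R} :
    Xᴴ * X * B = Xᴴ * X * C ↔ X * B = X * C := by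
  rw [← sub_eq_zero, ← Matrix.mul_sub, conjTranspose_mul_self_mul_eq_zero, Matrix.mul_sub,
    sub_eq_zero]

lemma IsInnerInverse.mul_mul_conjTranspose_mul_self [Ring R] [StarRing R]
    [StarOrderedRing R] [NoZeroDivisors R] {X : Matrix m n R} {G : Matrix n n R}
    (h : IsInnerInverse (Xᴴ * X) G) : X * G * Xᴴ * X = X := by
  classical
  have cancelled : X * (G * (Xᴴ * X)) = X * (1 : Matrix n n R) := by
    rw [← conjTranspose_mul_self_mul_inj, ← Matrix.mul_assoc, Matrix.mul_one]
    exact h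
  simpa only [Matrix.mul_assoc, Matrix.mul_one] using cancelled

end Gram

theorem stmt_15_general {m n r K : Type*} [Fintype m] [Fintype n] [Fintype r]
    [Field K] [PartialOrder K] [StarRing K] [StarOrderedRing K]
    {A : Matrix m n K} {Ω : Matrix n r K} {P : Matrix r r K}
    (hrank : (A * Ω).rank = A.rank) (hP : IsInnerInverse ((A * Ω)ᴴ * (A * Ω)) P) :
    A * Ω * (Aᴴ * (A * Ω) * P)ᴴ = A := by
  obtain ⟨W, hW⟩ :=
    exists_eq_mul_of_range_mulVecLin_le (range_mulVecLin_mul_eq_of_rank_mul_eq hrank).ge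
  set X := A * Ω
  have hPstar : IsInnerInverse (Xᴴ * X) Pᴴ := by
    simpa only [conjTranspose_mul, conjTranspose_conjTranspose] using hP.conjTranspose
  calc X * (Aᴴ * X * P)ᴴ
      = X * Pᴴ * Xᴴ * A := by
        simp only [conjTranspose_mul, conjTranspose_conjTranspose, Matrix.mul_assoc]
    _ = X * Pᴴ * Xᴴ * X * W := by rw [Matrix.mul_assoc _ X W, ← hW]
    _ = A := by rw [hPstar.mul_mul_conjTranspose_mul_self, ← hW]

/-- One-step global convergence of modified ScaledGD (with pseudoinverse preconditioner)
under Nyström initialization in the asymmetric over-parametrized setting (`r ≥ r_A`):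
with `X = AΩ` of rank `r_A`, `P = (XᵀX)†` and `Y = Aᵀ X P`, one has `XYᵀ = A`. -/
theorem stmt_15
    (m n rA r : ℕ) (hr : rA ≤ r)
    (A : Matrix (Fin m) (Fin n) ℝ) (hA : A.rank = rA)
    (Ω : Matrix (Fin n) (Fin r) ℝ)
    (X : Matrix (Fin m) (Fin r) ℝ) (hX : X = A * Ω)
    (hXrank : X.rank = rA)
    (P : Matrix (Fin r) (Fin r) ℝ)
    (hP1 : (Xᵀ * X) * P * (Xᵀ * X) = Xᵀ * X)
    (hP2 : P * (Xᵀ * X) * P = P)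
    (hP3 : ((Xᵀ * X) * P)ᵀ = (Xᵀ * X) * P)
    (hP4 : (P * (Xᵀ * X))ᵀ = P * (Xᵀ * X))
    (Y : Matrix (Fin n) (Fin r) ℝ) (hY : Y = Aᵀ * X * P) :
    X * Yᵀ = A := by
  subst hX hY
  simpa only [conjTranspose_eq_transpose_of_trivial] using
    stmt_15_general (hXrank.trans hA.symm) hP1
end
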